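/- Let G be a group with a T-valued 2-cocycle c, S an abelian subgroup on which c is symmetric, and η ∈ G an element commuting with all elements of S and satisfying c(s,η) = c(η,s) for all s ∈ S. Then for all s, t ∈ S and all nonnegative integers n, k, one has c(sη^k, tη^n) = c(tη^n, sη^k). -/

import Mathlib

/-!
For a fixed element `a`, the elements `x` with `a * x = x * a` and `c a x = c x a` form a submonoid:
they are those whose canonical lift commutes with the lift of `a` in the extension twisted by `c`.
So this condition for the pair `s * η ^ k`, `t * η ^ n` reduces to pairs taken from `s`, `t`, `η`.
-/

/-- The identity of a (multiplicative) 2-cocycle for the trivial action, without normalization. -/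
def IsTwoCocycle {G A : Type*} [Mul G] [Mul A] (c : G → G → A) : Prop :=
  ∀ g h k : G, c g (h * k) * c h k = c (g * h) k * c g h

/-- Commutation relative to `c`: if `A` is commutative and cancellative, it says that `(1, a)` and
`(1, b)` commute for the twisted product `(u, g) * (v, h) = (u * v * c g h, g * h)` on `A × G`. -/
def CocycleCommute {G A : Type*} [Mul G] (c : G → G → A) (a b : G) : Prop :=
  Commute a b ∧ c a b = c b a

namespace CocycleCommute

section Mul

variable {G A : Type*} [Mul G] {c : G → G → A} {a b : G}

theorem refl (c : G → G → A) (a : G) : CocycleCommute c a a :=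
  ⟨Commute.refl a, rfl⟩

theorem symm (h : CocycleCommute c a b) : CocycleCommute c b a :=
  ⟨h.1.symm, h.2.symm⟩

end Mul

theorem mul_right {G A : Type*} [Semigroup G] [Mul A] [IsRightCancelMul A] {c : G → G → A}
    (hc : IsTwoCocycle c) {a x y : G} (hx : CocycleCommute c a x) (hy : CocycleCommute c a y) :
    CocycleCommute c a (x * y) := by
  refine ⟨hx.1.mul_right hy.1, mul_right_cancel (b := c x y) ?_⟩
  calc c a (x * y) * c x y
      = c (a * x) y * c a x := hc a x y
    _ = c (x * a) y * c x a := by rw [hx.1.eq, hx.2]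
    _ = c x (a * y) * c a y := (hc x a y).symm
    _ = c x (y * a) * c y a := by rw [hy.1.eq, hy.2]
    _ = c (x * y) a * c x y := hc x y a

section Monoid

variable {G A : Type*} [Monoid G] [Mul A] {c : G → G → A}

theorem one_right [IsLeftCancelMul A] (hc : IsTwoCocycle c) (a : G) : CocycleCommute c a 1 := by
  refine ⟨Commute.one_right a, mul_left_cancel (a := c a a) ?_⟩
  simpa only [one_mul, mul_one] using (hc a 1 a).symm

theorem pow_right [IsCancelMul A] (hc : IsTwoCocycle c) {a x : G} (h : CocycleCommute c a x)
    (n : ℕ) : CocycleCommute c a (x ^ n) := by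
  induction n with
  | zero => simpa only [pow_zero] using one_right hc a
  | succ n ih => simpa only [pow_succ] using ih.mul_right hc h

end Monoid

end CocycleCommute

theorem cocycle_sym_on_powers_general {G A : Type*} [Monoid G] [Mul A] [IsCancelMul A]
    {c : G → G → A} (hc : IsTwoCocycle c) {s t η : G} (hst : CocycleCommute c s t)
    (hsη : CocycleCommute c s η) (htη : CocycleCommute c t η) (n k : ℕ) :
    CocycleCommute c (s * η ^ k) (t * η ^ n) := by
  have hs : CocycleCommute c (t * η ^ n) s := (hst.mul_right hc (hsη.pow_right hc n)).symm
  have hη : CocycleCommute c (t * η ^ n) η :=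
    (htη.symm.mul_right hc ((CocycleCommute.refl c η).pow_right hc n)).symm
  exact (hs.mul_right hc (hη.pow_right hc k)).symm

/-- If `η` commutes with all of the abelian subgroup `S` (on which `c` is symmetric)
and `c(s, η) = c(η, s)` for all `s ∈ S`, then `c(sη^k, tη^n) = c(tη^n, sη^k)`
for all `s, t ∈ S` and nonnegative integers `n, k`. -/
theorem cocycle_sym_on_powers {G : Type*} [Group G] (c : G → G → Circle)
    (hc_right : ∀ g : G, c g 1 = 1) (hc_left : ∀ g : G, c 1 g = 1)
    (hc : ∀ g h k : G, c g (h * k) * c h k = c (g * h) k * c g h)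
    (S : Subgroup G)
    (hab : ∀ s ∈ S, ∀ t ∈ S, s * t = t * s)
    (hsym : ∀ s ∈ S, ∀ t ∈ S, c s t = c t s)
    (η : G)
    (hcomm : ∀ s ∈ S, η * s = s * η)
    (hcsym : ∀ s ∈ S, c s η = c η s) :
    ∀ s ∈ S, ∀ t ∈ S, ∀ n k : ℕ,
      c (s * η ^ k) (t * η ^ n) = c (t * η ^ n) (s * η ^ k) := by
  intro s hs t ht n k
  have hst : CocycleCommute c s t := ⟨hab s hs t ht, hsym s hs t ht⟩
  have hη : ∀ r ∈ S, CocycleCommute c r η := fun r hr => ⟨(hcomm r hr).symm, hcsym r hr⟩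
  exact (cocycle_sym_on_powers_general hc hst (hη s hs) (hη t ht) n k).2
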